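/- Let L ≥ 1 and let an L-layer ReLU network on ℝ^{N₀} be given by matrices W_l ∈ ℝ^{N_{l−1}×N_l}, biases B_l ∈ ℝ^{N_l} (l = 1,…,L), readout w ∈ ℝ^{N_L}, b ∈ ℝ, with decision function f as defined below, and set A = ‖w‖ · ∏_{l=2}^{L} ‖W_l‖₂. Let M ⊆ {1,…,N₀} be a set of missing-feature indices and let x, x̂ ∈ ℝ^{N₀} satisfy x̂_n = x_n for every n ∉ M; set e = x − x̂. If for some ε > 0 one has f(x̂) < −ε and ε ≥ A · ‖W₁ᵀ e‖, then f(x) < 0. -/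

import Mathlib

open Matrix

/-- The Euclidean norm of a finitely-indexed real vector. -/
noncomputable def euclNorm {ι : Type*} [Fintype ι] (v : ι → ℝ) : ℝ :=
  Real.sqrt (∑ j, (v j) ^ 2)

/-- The operator (spectral) norm of the linear map `z ↦ Wᵀz` with respect to
Euclidean norms. -/
noncomputable def specNorm {p q : ℕ} (W : Matrix (Fin p) (Fin q) ℝ) : ℝ :=
  ‖LinearMap.toContinuousLinearMap
      (Matrix.toEuclideanLin (Wᵀ) :
        EuclideanSpace ℝ (Fin p) →ₗ[ℝ] EuclideanSpace ℝ (Fin q))‖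

/-- Layer outputs of an `L`-layer ReLU network: `x^(0) = x` and
`x^(l) = ReLU(Wₗᵀ x^(l-1) + Bₗ)`, where (because of 0-based indexing) the
paper's `W_l, B_l` are `W (l-1), B (l-1)` here, and ReLU is applied
entrywise as `t ↦ max t 0`. -/
def layerOut (N : ℕ → ℕ) (W : ∀ l, Matrix (Fin (N l)) (Fin (N (l + 1))) ℝ)
    (B : ∀ l, Fin (N (l + 1)) → ℝ) (x : Fin (N 0) → ℝ) :
    ∀ l, Fin (N l) → ℝ
  | 0 => x
  | l + 1 => fun j => max (((W l)ᵀ.mulVec (layerOut N W B x l)) j + B l j) 0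

/-!
ReLU is nonexpansive and the bias cancels in differences, so layer `l` expands Euclidean distances
by at most the factor `‖Wₗ‖₂`. The linear part of the first layer is not estimated, which leaves
`‖W₁ᵀe‖` at the end of the chain; Cauchy–Schwarz for the readout then gives
`|f x - f x̂| ≤ A * ‖W₁ᵀe‖ ≤ ε`, too little to change the sign of `f`.
-/

theorem euclNorm_eq_norm_toLp {ι : Type*} [Fintype ι] (v : ι → ℝ) :
    euclNorm v = ‖WithLp.toLp 2 v‖ := by
  simp only [euclNorm, EuclideanSpace.norm_eq, Real.norm_eq_abs, sq_abs]

theorem euclNorm_nonneg {ι : Type*} [Fintype ι] (v : ι → ℝ) : 0 ≤ euclNorm v :=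
  Real.sqrt_nonneg _

theorem euclNorm_smul {ι : Type*} [Fintype ι] (c : ℝ) (v : ι → ℝ) :
    euclNorm (c • v) = |c| * euclNorm v := by
  rw [euclNorm_eq_norm_toLp, euclNorm_eq_norm_toLp, WithLp.toLp_smul, norm_smul, Real.norm_eq_abs]

theorem euclNorm_le_of_abs_le {ι : Type*} [Fintype ι] {u v : ι → ℝ} (h : ∀ j, |u j| ≤ |v j|) :
    euclNorm u ≤ euclNorm v :=
  Real.sqrt_le_sqrt (Finset.sum_le_sum fun j _ => sq_le_sq.mpr (h j))

theorem abs_dotProduct_le_euclNorm_mul {ι : Type*} [Fintype ι] (u v : ι → ℝ) :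
    |u ⬝ᵥ v| ≤ euclNorm u * euclNorm v := by
  rw [euclNorm, euclNorm, ← Real.sqrt_mul (Finset.sum_nonneg fun j _ => sq_nonneg (u j))]
  exact Real.abs_le_sqrt (Finset.sum_mul_sq_le_sq_mul_sq _ u v)

theorem euclNorm_comp_sub_comp_le {ι : Type*} [Fintype ι] {K : NNReal} {σ : ℝ → ℝ}
    (hσ : LipschitzWith K σ) (u v : ι → ℝ) :
    euclNorm (σ ∘ u - σ ∘ v) ≤ K * euclNorm (u - v) := by
  have hentry (j : ι) : |(σ ∘ u - σ ∘ v) j| ≤ |((K : ℝ) • (u - v)) j| := by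
    simpa [Real.dist_eq, abs_mul] using hσ.dist_le_mul (u j) (v j)
  simpa only [euclNorm_smul, NNReal.abs_eq] using euclNorm_le_of_abs_le hentry

theorem specNorm_nonneg {p q : ℕ} (W : Matrix (Fin p) (Fin q) ℝ) : 0 ≤ specNorm W :=
  norm_nonneg _

theorem euclNorm_transpose_mulVec_le {p q : ℕ} (W : Matrix (Fin p) (Fin q) ℝ) (v : Fin p → ℝ) :
    euclNorm (Wᵀ *ᵥ v) ≤ specNorm W * euclNorm v := by
  rw [euclNorm_eq_norm_toLp, euclNorm_eq_norm_toLp]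
  exact (LinearMap.toContinuousLinearMap (Matrix.toEuclideanLin Wᵀ)).le_opNorm (WithLp.toLp 2 v)

section Network

variable (N : ℕ → ℕ) (W : ∀ l, Matrix (Fin (N l)) (Fin (N (l + 1))) ℝ)
  (B : ∀ l, Fin (N (l + 1)) → ℝ) (x y : Fin (N 0) → ℝ)

theorem euclNorm_layerOut_succ_sub_le (l : ℕ) :
    euclNorm (layerOut N W B x (l + 1) - layerOut N W B y (l + 1)) ≤
      euclNorm ((W l)ᵀ *ᵥ (layerOut N W B x l - layerOut N W B y l)) := by
  have hrelu : LipschitzWith 1 fun t : ℝ => max t 0 := LipschitzWith.id.max_const 0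
  have hlayer := euclNorm_comp_sub_comp_le hrelu
    ((W l)ᵀ *ᵥ layerOut N W B x l + B l) ((W l)ᵀ *ᵥ layerOut N W B y l + B l)
  rwa [NNReal.coe_one, one_mul, add_sub_add_right_eq_sub, ← mulVec_sub] at hlayer

theorem euclNorm_layerOut_sub_le_prod_mul {k l : ℕ} (hkl : k ≤ l) :
    euclNorm (layerOut N W B x l - layerOut N W B y l) ≤
      (∏ i ∈ Finset.Ico k l, specNorm (W i)) *
        euclNorm (layerOut N W B x k - layerOut N W B y k) := by
  induction l, hkl using Nat.le_induction with
  | base => rw [Finset.Ico_self, Finset.prod_empty, one_mul]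
  | succ l hkl ih =>
    calc euclNorm (layerOut N W B x (l + 1) - layerOut N W B y (l + 1))
      _ ≤ euclNorm ((W l)ᵀ *ᵥ (layerOut N W B x l - layerOut N W B y l)) :=
        euclNorm_layerOut_succ_sub_le N W B x y l
      _ ≤ specNorm (W l) * euclNorm (layerOut N W B x l - layerOut N W B y l) :=
        euclNorm_transpose_mulVec_le _ _
      _ ≤ specNorm (W l) * ((∏ i ∈ Finset.Ico k l, specNorm (W i)) *
            euclNorm (layerOut N W B x k - layerOut N W B y k)) :=
        mul_le_mul_of_nonneg_left ih (specNorm_nonneg _)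
      _ = (∏ i ∈ Finset.Ico k (l + 1), specNorm (W i)) *
            euclNorm (layerOut N W B x k - layerOut N W B y k) := by
        rw [Finset.prod_Ico_succ_top hkl, mul_left_comm, mul_assoc]

theorem abs_dotProduct_layerOut_sub_le {L : ℕ} (hL : 1 ≤ L) (w : Fin (N L) → ℝ) :
    |w ⬝ᵥ layerOut N W B x L - w ⬝ᵥ layerOut N W B y L| ≤
      euclNorm w * (∏ l ∈ Finset.Ico 1 L, specNorm (W l)) * euclNorm ((W 0)ᵀ *ᵥ (x - y)) := by
  have hprod : 0 ≤ ∏ l ∈ Finset.Ico 1 L, specNorm (W l) :=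
    Finset.prod_nonneg fun l _ => specNorm_nonneg (W l)
  calc |w ⬝ᵥ layerOut N W B x L - w ⬝ᵥ layerOut N W B y L|
    _ = |w ⬝ᵥ (layerOut N W B x L - layerOut N W B y L)| := by rw [dotProduct_sub]
    _ ≤ euclNorm w * euclNorm (layerOut N W B x L - layerOut N W B y L) :=
      abs_dotProduct_le_euclNorm_mul _ _
    _ ≤ euclNorm w * ((∏ l ∈ Finset.Ico 1 L, specNorm (W l)) *
          euclNorm (layerOut N W B x 1 - layerOut N W B y 1)) :=
      mul_le_mul_of_nonneg_left (euclNorm_layerOut_sub_le_prod_mul N W B x y hL)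
        (euclNorm_nonneg w)
    _ ≤ euclNorm w * ((∏ l ∈ Finset.Ico 1 L, specNorm (W l)) *
          euclNorm ((W 0)ᵀ *ᵥ (x - y))) :=
      mul_le_mul_of_nonneg_left
        (mul_le_mul_of_nonneg_left (euclNorm_layerOut_succ_sub_le N W B x y 0) hprod)
        (euclNorm_nonneg w)
    _ = euclNorm w * (∏ l ∈ Finset.Ico 1 L, specNorm (W l)) * euclNorm ((W 0)ᵀ *ᵥ (x - y)) :=
      (mul_assoc _ _ _).symm

end Network

/-- The negative-class case of Proposition 2 (multilayer-perceptron sufficient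
condition): if the reconstruction `x̂` matches `x` on all observed
(non-missing) features and the margin `ε` dominates `A·‖W₁ᵀe‖` with
`A = ‖w‖·∏_{l=2}^L ‖Wₗ‖₂` and `e = x − x̂`, then the ReLU network classifies
`x` in the same (negative) class as `x̂`. -/
theorem prop2_neg (L : ℕ) (hL : 1 ≤ L) (N : ℕ → ℕ)
    (W : ∀ l, Matrix (Fin (N l)) (Fin (N (l + 1))) ℝ)
    (B : ∀ l, Fin (N (l + 1)) → ℝ)
    (w : Fin (N L) → ℝ) (b : ℝ)
    (f : (Fin (N 0) → ℝ) → ℝ)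
    (hf : ∀ x, f x = (∑ j, w j * layerOut N W B x L j) + b)
    (A : ℝ) (hA : A = euclNorm w * ∏ l ∈ Finset.Ico 1 L, specNorm (W l))
    (M : Finset (Fin (N 0))) (x xhat : Fin (N 0) → ℝ)
    (hobs : ∀ n, n ∉ M → xhat n = x n)
    (e : Fin (N 0) → ℝ) (he : e = x - xhat)
    (ε : ℝ) (hε : 0 < ε)
    (hsep : f xhat < -ε)
    (herr : ε ≥ A * euclNorm ((W 0)ᵀ.mulVec e)) :
    f x < 0 := by
  subst hA he
  have hdiff : f x - f xhat = w ⬝ᵥ layerOut N W B x L - w ⬝ᵥ layerOut N W B xhat L := by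
    rw [hf, hf, add_sub_add_right_eq_sub, dotProduct, dotProduct]
  have hbound : f x - f xhat ≤ ε := by
    rw [hdiff]
    exact (le_of_abs_le (abs_dotProduct_layerOut_sub_le N W B x xhat hL w)).trans herr
  linarith
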